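/- Let G be a finite connected simple graph with vertex set V and edge set E, and let L = |E| − |V| + 1. Then there exist an orientation of G (a choice, for each edge, of an ordered pair (tail, head) of its two endpoints) and closed walks c₁, …, c_L in G, each of which is a cycle (a closed walk with no repeated vertices other than its endpoint, in particular traversing each of its edges exactly once), such that every step of every cⱼ traverses its edge from the chosen tail to the chosen head, and such that the edge-indicator vectors of c₁, …, c_L (the elements of ℝ^E assigning 1 to the edges traversed by cⱼ and 0 to the others) are linearly independent over ℝ. -/

import Mathlib

open SimpleGraph

/-!
Among the rooted spanning forests of `G`, choose one whose depth function is maximal. If an edge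
`uv` with `depth u ≤ depth v` did not join `v` to one of its ancestors, hanging the branch at `u`
below `v` would increase the depths. So every edge outside the forest is a back edge, joining a
vertex to one of its ancestors. Orient the forest edges away from the roots and the back edges
towards them: each back edge closes a coherently oriented cycle with the forest path between its
ends. No other back edge lies on this cycle, which gives linear independence, and the back edges are
numerous enough because each component contains a root, so that the forest has at most `|V|` minus
the number of components edges.
-/

theorem linearIndependent_ite_of_iff_eq (R : Type*) [CommRing R] {ι α : Type*}
    (p : ι → α → Prop) [∀ j, DecidablePred (p j)] (a : ι → α) (hp : ∀ i j, p j (a i) ↔ i = j) :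
    LinearIndependent R fun j ↦ fun x ↦ if p j x then (1 : R) else 0 :=
  .of_pairwise_dual_eq_zero_one _ (fun i ↦ LinearMap.proj (a i))
    (fun i j hij ↦ if_neg ((hp i j).not.2 hij)) (fun i ↦ if_pos ((hp i i).2 rfl))

section

variable {V : Type*} {G : SimpleGraph V}

theorem isPath_of_forall_darts_lt {α : Type*} [Preorder α] (f : V → α) {u v : V} (p : G.Walk u v)
    (hlt : ∀ d ∈ p.darts, f d.fst < f d.snd) : p.IsPath := by
  suffices p.IsPath ∧ ∀ x ∈ p.support, f u ≤ f x from this.1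
  induction p with
  | nil => simp
  | cons hadj p ih =>
    simp only [Walk.darts_cons, List.forall_mem_cons] at hlt
    obtain ⟨hp, hle⟩ := ih hlt.2
    have support_above : ∀ x ∈ p.support, f _ < f x := fun x hx ↦ hlt.1.trans_le (hle x hx)
    refine ⟨hp.cons fun hu ↦ (support_above _ hu).false, ?_⟩
    rw [Walk.support_cons, List.forall_mem_cons]
    exact ⟨le_rfl, fun x hx ↦ (support_above x hx).le⟩

theorem exists_tail_head_of_iff_not_swap (r : V → V → Prop)
    (hr : ∀ u v, G.Adj u v → (r u v ↔ ¬ r v u)) :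
    ∃ tail head : Sym2 V → V, (∀ e, e = s(tail e, head e)) ∧
      ∀ d : G.Dart, r d.fst d.snd → tail d.edge = d.fst ∧ head d.edge = d.snd := by
  have exists_ends (e : Sym2 V) :
      ∃ u v, e = s(u, v) ∧ (e ∈ G.edgeSet → r u v) := by
    induction e with | _ u v
    by_cases huv : G.Adj u v → r u v
    · exact ⟨u, v, rfl, huv⟩
    · obtain ⟨hadj, hnot⟩ := Classical.not_imp.1 huv
      exact ⟨v, u, Sym2.eq_swap, fun _ ↦ (hr v u hadj.symm).2 hnot⟩
  choose tail head heq hflow using exists_ends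
  refine ⟨tail, head, heq, fun d hd ↦ ?_⟩
  obtain ⟨htail, hhead⟩ | ⟨htail, hhead⟩ := Sym2.eq_iff.1 (heq d.edge)
  · exact ⟨htail.symm, hhead.symm⟩
  · have hswap := hflow _ d.edge_mem
    rw [← htail, ← hhead] at hswap
    exact absurd hswap ((hr _ _ d.adj).1 hd)

end

/-- A rooted spanning forest of `G`, encoded by its parent and depth maps. The roots are the
vertices of depth zero; each is its own parent, so that iterating `parent` stops there, and
`depth_parent` holds at roots because natural-number subtraction truncates. -/
structure RootedForest {V : Type*} (G : SimpleGraph V) where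
  parent : V → V
  depth : V → ℕ
  parent_eq_self {w : V} : depth w = 0 → parent w = w
  adj_parent {w : V} : depth w ≠ 0 → G.Adj w (parent w)
  depth_parent (w : V) : depth (parent w) = depth w - 1

namespace RootedForest

variable {V : Type*} {G : SimpleGraph V} (F : RootedForest G) {u v w : V}

theorem depth_iterate_parent (n : ℕ) (w : V) : F.depth (F.parent^[n] w) = F.depth w - n := by
  induction n generalizing w with
  | zero => rfl
  | succ n ih => rw [Function.iterate_succ_apply, ih, depth_parent, Nat.sub_sub, Nat.add_comm]

theorem depth_parent_lt (hw : F.depth w ≠ 0) : F.depth (F.parent w) < F.depth w := by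
  rw [depth_parent]
  omega

theorem depth_lt_card [Fintype V] (w : V) : F.depth w < Fintype.card V := by
  have ancestors_injective :
      Function.Injective fun i : Fin (F.depth w + 1) ↦ F.parent^[i] w := by
    intro i j hij
    have hdepth := congrArg F.depth hij
    simp only [depth_iterate_parent] at hdepth
    omega
  simpa [Nat.succ_le_iff] using Fintype.card_le_of_injective _ ancestors_injective

theorem reachable_iterate_parent (n : ℕ) (w : V) : G.Reachable w (F.parent^[n] w) := by
  induction n generalizing w with
  | zero => rfl
  | succ n ih =>
    rw [Function.iterate_succ_apply]
    by_cases hw : F.depth w = 0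
    · rw [F.parent_eq_self hw]
      exact ih w
    · exact (F.adj_parent hw).reachable.trans (ih _)

/-- The edges of the forest. -/
def edges : Set (Sym2 V) :=
  (fun w ↦ s(F.parent w, w)) '' {w | F.depth w ≠ 0}

theorem card_connectedComponent_le_ncard_roots [Finite V] :
    Nat.card G.ConnectedComponent ≤ {w | F.depth w = 0}.ncard := by
  refine Nat.card_le_card_of_surjective
    (fun w : {w | F.depth w = 0} ↦ G.connectedComponentMk w) fun C ↦ ?_
  obtain ⟨w, rfl⟩ := C.exists_rep
  exact ⟨⟨F.parent^[F.depth w] w, by simp [depth_iterate_parent]⟩,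
    ConnectedComponent.sound (F.reachable_iterate_parent _ w).symm⟩

theorem ncard_edges_add_card_connectedComponent_le [Finite V] :
    F.edges.ncard + Nat.card G.ConnectedComponent ≤ Nat.card V :=
  calc F.edges.ncard + Nat.card G.ConnectedComponent
      ≤ {w | F.depth w = 0}ᶜ.ncard + {w | F.depth w = 0}.ncard :=
        add_le_add (Set.ncard_image_le (Set.toFinite _)) F.card_connectedComponent_le_ncard_roots
    _ = Nat.card V := by rw [add_comm, Set.ncard_add_ncard_compl]

/-- `u` is an ancestor of `v`, possibly `v` itself. -/
def IsAncestor (u v : V) : Prop :=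
  ∃ n, F.parent^[n] v = u

variable {F}

theorem IsAncestor.refl (u : V) : F.IsAncestor u u :=
  ⟨0, rfl⟩

theorem IsAncestor.depth_lt_of_ne (h : F.IsAncestor u v) (hne : u ≠ v) :
    F.depth u < F.depth v := by
  obtain ⟨n, rfl⟩ := h
  have hn : n ≠ 0 := by rintro rfl; exact hne rfl
  have hv : F.depth v ≠ 0 := fun hv ↦ hne (Function.iterate_fixed (F.parent_eq_self hv) n)
  rw [depth_iterate_parent]
  omega

theorem isAncestor_parent_iff (hne : w ≠ u) : F.IsAncestor u (F.parent w) ↔ F.IsAncestor u w := by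
  refine ⟨fun ⟨n, hn⟩ ↦ ⟨n + 1, hn⟩, ?_⟩
  rintro ⟨_ | n, hn⟩
  · exact absurd hn hne
  · exact ⟨n, hn⟩

open Classical in
/-- The forest obtained from `F` by cutting off the branch at `u` and hanging it below `v`. -/
noncomputable def rehang (F : RootedForest G) (hadj : G.Adj u v) (hle : F.depth u ≤ F.depth v)
    (hanc : ¬ F.IsAncestor u v) : RootedForest G where
  parent := Function.update F.parent u v
  depth w := F.depth w + if F.IsAncestor u w then F.depth v + 1 - F.depth u else 0
  parent_eq_self {w} hw := by
    have hwu : w ≠ u := by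
      rintro rfl
      simp only [IsAncestor.refl, if_true] at hw
      omega
    rw [Function.update_of_ne hwu, F.parent_eq_self (by omega)]
  adj_parent {w} hw := by
    obtain rfl | hwu := eq_or_ne w u
    · simpa using hadj
    rw [Function.update_of_ne hwu]
    refine F.adj_parent fun hw₀ ↦ ?_
    by_cases huw : F.IsAncestor u w
    · have := huw.depth_lt_of_ne hwu.symm
      omega
    · simp [hw₀, huw] at hw
  depth_parent w := by
    obtain rfl | hwu := eq_or_ne w u
    · simp only [Function.update_self, hanc, IsAncestor.refl, if_true, if_false]
      omega
    rw [Function.update_of_ne hwu, F.depth_parent, isAncestor_parent_iff hwu]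
    split_ifs with huw
    · have := huw.depth_lt_of_ne hwu.symm
      omega
    · rfl

theorem depth_lt_depth_rehang (hadj : G.Adj u v) (hle : F.depth u ≤ F.depth v)
    (hanc : ¬ F.IsAncestor u v) : F.depth < (F.rehang hadj hle hanc).depth := by
  refine Pi.lt_def.2 ⟨fun w ↦ Nat.le_add_right _ _, u, ?_⟩
  simp only [rehang, IsAncestor.refl, if_true]
  omega

/-- The forest is normal (a depth-first search forest): every edge of `G` joins a vertex to one of
its ancestors. -/
def IsNormal (F : RootedForest G) : Prop :=
  ∀ ⦃u v⦄, G.Adj u v → F.IsAncestor u v ∨ F.IsAncestor v u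

instance : Nonempty (RootedForest G) :=
  ⟨{ parent := id
     depth := 0
     parent_eq_self _ := rfl
     adj_parent h := absurd rfl h
     depth_parent _ := rfl }⟩

theorem exists_isNormal [Finite V] (G : SimpleGraph V) : ∃ F : RootedForest G, F.IsNormal := by
  cases nonempty_fintype V
  have finite_depths : ((depth : RootedForest G → V → ℕ) '' Set.univ).Finite := by
    classical
    refine (Set.finite_Icc 0 fun _ : V ↦ Fintype.card V).subset ?_
    rintro _ ⟨F, -, rfl⟩
    exact ⟨fun w ↦ Nat.zero_le _, fun w ↦ (F.depth_lt_card w).le⟩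
  obtain ⟨F, -, hmax⟩ := Set.Finite.exists_maximalFor' _ _ finite_depths Set.univ_nonempty
  have isAncestor_of_le {u v : V} (hadj : G.Adj u v) (hle : F.depth u ≤ F.depth v) :
      F.IsAncestor u v := by
    by_contra hanc
    have hlt := depth_lt_depth_rehang hadj hle hanc
    exact hlt.not_ge (hmax (Set.mem_univ _) hlt.le)
  exact ⟨F, fun u v hadj ↦ (le_total (F.depth u) (F.depth v)).imp
    (isAncestor_of_le hadj) (isAncestor_of_le hadj.symm)⟩

theorem IsNormal.depth_ne (hF : F.IsNormal) (hadj : G.Adj u v) : F.depth u ≠ F.depth v :=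
  (hF hadj).elim (fun h ↦ (h.depth_lt_of_ne hadj.ne).ne)
    (fun h ↦ (h.depth_lt_of_ne hadj.ne').ne')

/-- The coherent orientation of the edges of `G`: going from `u` to `v` leads away from the roots on
a forest edge and towards them on any other edge. For ends of different depths the equivalence
selects exactly one of the two directions. -/
def Flows (F : RootedForest G) (u v : V) : Prop :=
  s(u, v) ∈ F.edges ↔ F.depth u < F.depth v

theorem IsNormal.flows_iff_not_flows (hF : F.IsNormal) (hadj : G.Adj u v) :
    F.Flows u v ↔ ¬ F.Flows v u := by
  have hne := hF.depth_ne hadj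
  rw [Flows, Flows, Sym2.eq_swap]
  grind

theorem IsAncestor.exists_walk (h : F.IsAncestor u v) :
    ∃ q : G.Walk u v, ∀ d ∈ q.darts, d.edge ∈ F.edges ∧ F.depth d.fst < F.depth d.snd := by
  obtain ⟨n, hn⟩ := h
  induction n generalizing v with
  | zero =>
    obtain rfl : v = u := hn
    exact ⟨.nil, by simp⟩
  | succ n ih =>
    obtain ⟨q, hq⟩ := ih hn
    by_cases hv : F.depth v = 0
    · exact ⟨q.copy rfl (F.parent_eq_self hv), by simpa using hq⟩
    · refine ⟨q.concat (F.adj_parent hv).symm, fun d hd ↦ ?_⟩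
      rw [Walk.darts_concat, List.concat_eq_append, List.mem_append, List.mem_singleton] at hd
      obtain hd | rfl := hd
      · exact hq d hd
      · exact ⟨⟨v, hv, rfl⟩, F.depth_parent_lt hv⟩

theorem IsAncestor.exists_isCycle (h : F.IsAncestor u v) (hadj : G.Adj v u)
    (hback : s(v, u) ∉ F.edges) :
    ∃ c : G.Walk v v, c.IsCycle ∧ (∀ d ∈ c.darts, F.Flows d.fst d.snd) ∧
      ∀ f ∉ F.edges, f ∈ c.edges ↔ f = s(v, u) := by
  obtain ⟨q, hq⟩ := h.exists_walk
  have edges_subset : ∀ f ∈ q.edges, f ∈ F.edges := by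
    simpa [Walk.edges] using fun d hd ↦ (hq d hd).1
  have hpath : q.IsPath := isPath_of_forall_darts_lt F.depth q fun d hd ↦ (hq d hd).2
  have flows_back : F.Flows v u :=
    iff_of_false hback (h.depth_lt_of_ne hadj.ne').not_gt
  refine ⟨.cons hadj q, ?_, ?_, fun f hf ↦ ?_⟩
  · exact (Walk.cons_isCycle_iff q hadj).2 ⟨hpath, fun hmem ↦ hback (edges_subset _ hmem)⟩
  · rw [Walk.darts_cons, List.forall_mem_cons]
    exact ⟨flows_back, fun d hd ↦ iff_of_true (hq d hd).1 (hq d hd).2⟩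
  · rw [Walk.edges_cons, List.mem_cons, or_iff_left fun hmem ↦ hf (edges_subset f hmem)]

theorem IsNormal.exists_isCycle (hF : F.IsNormal) {e : Sym2 V} (he : e ∈ G.edgeSet \ F.edges) :
    ∃ c : Σ v : V, G.Walk v v, c.2.IsCycle ∧ (∀ d ∈ c.2.darts, F.Flows d.fst d.snd) ∧
      ∀ f ∉ F.edges, f ∈ c.2.edges ↔ f = e := by
  obtain ⟨hadj, hback⟩ := he
  induction e with | _ u v
  rw [mem_edgeSet] at hadj
  obtain h | h := hF hadj
  · rw [Sym2.eq_swap] at hback ⊢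
    obtain ⟨c, hc⟩ := h.exists_isCycle hadj.symm hback
    exact ⟨⟨v, c⟩, hc⟩
  · obtain ⟨c, hc⟩ := h.exists_isCycle hadj hback
    exact ⟨⟨u, c⟩, hc⟩

theorem ncard_edgeSet_add_card_sub_card_le_ncard_diff [Finite V] (F : RootedForest G) :
    G.edgeSet.ncard + Nat.card G.ConnectedComponent - Nat.card V ≤
      (G.edgeSet \ F.edges).ncard := by
  have hdiff := Set.le_ncard_sdiff F.edges G.edgeSet
  have hforest := F.ncard_edges_add_card_connectedComponent_le
  omega

end RootedForest

open RootedForest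

theorem exists_orientation_and_independent_cycles_general
    {V : Type*} [Fintype V] [DecidableEq V] (G : SimpleGraph V) [DecidableRel G.Adj]
    (R : Type*) [CommRing R] :
    ∃ (tail head : Sym2 V → V)
      (c : Fin (G.edgeFinset.card + Nat.card G.ConnectedComponent - Fintype.card V) →
        Σ v : V, G.Walk v v),
      (∀ e ∈ G.edgeSet, e = s(tail e, head e)) ∧
      (∀ j, ((c j).2).IsCycle) ∧
      (∀ j, ∀ d ∈ ((c j).2).darts,
        tail d.edge = d.toProd.1 ∧ head d.edge = d.toProd.2) ∧
      LinearIndependent R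
        (fun j => fun e : Sym2 V => if e ∈ ((c j).2).edges then (1 : R) else 0) := by
  obtain ⟨F, hF⟩ := exists_isNormal G
  obtain ⟨tail, head, hends, hflow⟩ :=
    exists_tail_head_of_iff_not_swap F.Flows fun _ _ ↦ hF.flows_iff_not_flows
  choose c hcycle hcoherent hedges using
    fun e : ↥(G.edgeSet \ F.edges) ↦ hF.exists_isCycle e.2
  obtain ⟨backEdge⟩ : Nonempty
      (Fin (G.edgeFinset.card + Nat.card G.ConnectedComponent - Fintype.card V) ↪
        ↥(G.edgeSet \ F.edges)) := by
    cases nonempty_fintype ↥(G.edgeSet \ F.edges)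
    refine Function.Embedding.nonempty_of_card_le ?_
    rw [Fintype.card_fin]
    simpa [← Nat.card_eq_fintype_card, ← Set.ncard_coe_finset] using
      F.ncard_edgeSet_add_card_sub_card_le_ncard_diff
  refine ⟨tail, head, fun j ↦ c (backEdge j), fun e _ ↦ hends e, fun j ↦ hcycle _,
    fun j d hd ↦ hflow d (hcoherent _ d hd), ?_⟩
  refine linearIndependent_ite_of_iff_eq R _ (fun i ↦ (backEdge i : Sym2 V)) fun i j ↦ ?_
  rw [hedges _ _ (backEdge i).2.2, Subtype.coe_inj, backEdge.injective.eq_iff]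

theorem exists_orientation_and_independent_cycles
    {V : Type*} [Fintype V] [DecidableEq V]
    (G : SimpleGraph V) [DecidableRel G.Adj] (hG : G.Connected) :
    ∃ (tail head : Sym2 V → V)
      (c : Fin (G.edgeFinset.card + 1 - Fintype.card V) → Σ v : V, G.Walk v v),
      (∀ e ∈ G.edgeSet, e = s(tail e, head e)) ∧
      (∀ j, ((c j).2).IsCycle) ∧
      (∀ j, ∀ d ∈ ((c j).2).darts,
        tail d.edge = d.toProd.1 ∧ head d.edge = d.toProd.2) ∧
      LinearIndependent ℝ
        (fun j => fun e : Sym2 V => if e ∈ ((c j).2).edges then (1 : ℝ) else 0) := by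
  have hcomponents : Nat.card G.ConnectedComponent = 1 :=
    Nat.card_eq_one_iff_unique.2
      ⟨hG.preconnected.subsingleton_connectedComponent, hG.nonempty.map G.connectedComponentMk⟩
  exact hcomponents ▸ exists_orientation_and_independent_cycles_general G ℝ
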